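/- Let α ∈ [1,∞), β ∈ (-1,0), z ∈ ℂ∖ℝ, σ = σ_{α,β}(z), and c ∈ ℂ. Then the function x ↦ y_{1,α,β}(z,x) - 2^{-α-1} β^{-1} c · y_{2,α,β}(z,x) belongs to L²((0,1); (1-x)^α(1+x)^β dx) if and only if c = 2^{1+α+β} β (Γ(1+β)/Γ(1-β)) · Γ((1+α-β+σ)/2) Γ((1+α-β-σ)/2) / ( Γ((1+α+β+σ)/2) Γ((1+α+β-σ)/2) ). -/

import Mathlib

/-!
In the variable `t = (1+x)/2` both `y₁` and `y₂` (up to a constant factor) solve the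
hypergeometric equation with parameters `a = a₊`, `b = a₋`, `1+β` on `(0,1)`, and the question
is how a combination `Y` of them behaves as `t → 1`.

Leading behaviour. When `a + b = c + α` with `α > 0`, the Gauss limit formula for `Γ` shows that
the ratio of the Taylor coefficients of `₂F₁(a,b;c;t)` to those of `(1-t)^(-α)` tends to
`Γ(c)Γ(α)/(Γ(a)Γ(b))` (`tendsto_hypCoeff_div`). An Abelian theorem turns this into
`(1-t)^α ₂F₁(a,b;c;t) → Γ(c)Γ(α)/(Γ(a)Γ(b))` (`tendsto_hyp2F1`). It applies to `y₁` and to `y₂`,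
so `(1-t)^α Y(t)` has a limit `L`, and `L = 0` exactly for the stated value of `c`.

If `L ≠ 0`, the integrand is bounded below by a multiple of `1/(1-x)` near `1` because `α ≥ 1`,
so it is not integrable (`not_integrableOn_of_tendsto`).

If `L = 0`, let `v(t) = ₂F₁(a,b;1+α;1-t)` be the solution regular at `1`. By Abel's identity
`(Y/v)'` equals a constant `C` times `t^(-1-β) (1-t)^(-1-α) v^(-2)`; were `C ≠ 0`, `Y` would
have size `(1-t)^(-α)`, contradicting `L = 0`. So `Y` is a multiple of `v` near `1`, hence bounded
(`SolvesHyp.bounded_of_tendsto_zero`), and the integrand is integrable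
(`integrableOn_of_bounded`).
-/

open Complex MeasureTheory

/-- The Pochhammer symbol `(u)_n = ∏_{j=0}^{n-1} (u+j)` for complex `u`. -/
noncomputable def cpoch (u : ℂ) (n : ℕ) : ℂ := ∏ j ∈ Finset.range n, (u + (j : ℂ))

/-- The Gauss hypergeometric series `₂F₁(a,b;c;ξ)`. -/
noncomputable def hyp2F1 (a b c ξ : ℂ) : ℂ :=
  ∑' n : ℕ, cpoch a n * cpoch b n / (cpoch c n * (n.factorial : ℂ)) * ξ ^ n

/-- Principal branch of the square root `σ_{α,β}(z) = ((1+α+β)^2 + 4z)^{1/2}`. -/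
noncomputable def sigmaAB (α β : ℝ) (z : ℂ) : ℂ :=
  (((1 + α + β : ℝ) : ℂ) ^ 2 + 4 * z) ^ ((1 : ℂ) / 2)

/-- The first Jacobi solution `y_{1,α,β}(z,·)` at the endpoint `-1`. -/
noncomputable def y1J (α β : ℝ) (z : ℂ) (x : ℝ) : ℂ :=
  hyp2F1 ((((1 + α + β : ℝ) : ℂ) + sigmaAB α β z) / 2)
    ((((1 + α + β : ℝ) : ℂ) - sigmaAB α β z) / 2)
    (1 + (β : ℂ)) (((1 + x) / 2 : ℝ) : ℂ)

/-- The second Jacobi solution `y_{2,α,β}(z,·)` at the endpoint `-1`. -/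
noncomputable def y2J (α β : ℝ) (z : ℂ) (x : ℝ) : ℂ :=
  (((1 + x : ℝ) : ℂ)) ^ (-(β : ℂ)) *
    hyp2F1 ((((1 + α - β : ℝ) : ℂ) + sigmaAB α β z) / 2)
      ((((1 + α - β : ℝ) : ℂ) - sigmaAB α β z) / 2)
      (1 - (β : ℂ)) (((1 + x) / 2 : ℝ) : ℂ)

open Filter Topology Set

/-! ### The hypergeometric power series and its differential equation -/

/-- The Taylor coefficients of `₂F₁(a,b;c;·)`. -/
noncomputable def hypCoeff (a b c : ℂ) (n : ℕ) : ℂ :=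
  cpoch a n * cpoch b n / (cpoch c n * (n.factorial : ℂ))

lemma cpoch_succ (u : ℂ) (n : ℕ) : cpoch u (n + 1) = cpoch u n * (u + n) := by
  simp [cpoch, Finset.prod_range_succ]

lemma add_natCast_ne_zero {c : ℂ} (hc : 0 < c.re) (n : ℕ) : c + n ≠ 0 := by
  intro h
  have := congrArg Complex.re h
  simp at this
  have : (0 : ℝ) ≤ n := n.cast_nonneg
  linarith

lemma cpoch_ne_zero {u : ℂ} (hu : ∀ n : ℕ, u + n ≠ 0) (n : ℕ) : cpoch u n ≠ 0 :=
  Finset.prod_ne_zero_iff.2 fun j _ => hu j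

lemma hypCoeff_succ {a b c : ℂ} (hc : 0 < c.re) (n : ℕ) :
    (n + 1) * (c + n) * hypCoeff a b c (n + 1) = (a + n) * (b + n) * hypCoeff a b c n := by
  have h1 := cpoch_ne_zero (add_natCast_ne_zero hc) n
  have h2 := add_natCast_ne_zero hc n
  have h3 : (n.factorial : ℂ) ≠ 0 := by exact_mod_cast n.factorial_ne_zero
  have h4 : (n : ℂ) + 1 ≠ 0 := by exact_mod_cast n.succ_ne_zero
  simp only [hypCoeff, cpoch_succ, Nat.factorial_succ]
  push_cast
  field_simp

/-- A power series with coefficients `A` converges absolutely on the open unit disc. -/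
def UnitSummable (A : ℕ → ℂ) : Prop :=
  ∀ r : ℝ, 0 ≤ r → r < 1 → Summable fun n => ‖A n‖ * r ^ n

lemma UnitSummable.summable {A : ℕ → ℂ} (hA : UnitSummable A) {w : ℂ} (hw : ‖w‖ < 1) :
    Summable fun n => A n * w ^ n := by
  refine Summable.of_norm ?_
  simpa using hA ‖w‖ (norm_nonneg _) hw

lemma unitSummable_hypCoeff (a b : ℂ) {c : ℂ} (hc : 0 < c.re) :
    UnitSummable (hypCoeff a b c) := by
  intro r hr0 hr1
  have hlim : Tendsto (fun n : ℕ => ((a + 1 * n) / (c + 1 * n)) * ((b + 1 * n) / (1 + 1 * n)) * (r : ℂ))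
      atTop (𝓝 ((1 / 1) * (1 / 1) * (r : ℂ))) :=
    ((tendsto_add_mul_div_add_mul_atTop_nhds a c (1 : ℂ) one_ne_zero).mul
      (tendsto_add_mul_div_add_mul_atTop_nhds b 1 (1 : ℂ) one_ne_zero)).mul_const _
  have hlim' := hlim.norm
  simp only [one_mul, div_one, Complex.norm_real, Real.norm_of_nonneg hr0] at hlim'
  obtain ⟨q, hq1, hq2⟩ := exists_between hr1
  refine summable_of_ratio_norm_eventually_le hq2 ?_
  filter_upwards [hlim'.eventually_le_const hq1] with n hn
  have h2 := add_natCast_ne_zero hc n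
  have h4 : (1 : ℂ) + n ≠ 0 := by exact_mod_cast (by omega : 1 + n ≠ 0)
  have h5 : hypCoeff a b c (n + 1) =
      ((a + n) / (c + n)) * ((b + n) / (1 + n)) * hypCoeff a b c n := by
    have := hypCoeff_succ (a := a) (b := b) hc n
    field_simp
    linear_combination this
  rw [h5]
  simp only [norm_mul, norm_norm, Complex.norm_real, norm_pow, Real.norm_of_nonneg hr0, pow_succ] at hn ⊢
  have h6 : 0 ≤ ‖hypCoeff a b c n‖ * r ^ n := by positivity
  nlinarith [mul_le_mul_of_nonneg_right hn h6]

lemma UnitSummable.deriv {A : ℕ → ℂ} (hA : UnitSummable A) :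
    UnitSummable fun n => (n + 1) * A (n + 1) := by
  intro r hr0 hr1
  obtain ⟨s, hs1, hs2⟩ := exists_between hr1
  have hs0 : 0 < s := hr0.trans_lt hs1
  have h1 := (summable_nat_add_iff 1).2 (hA s hs0.le hs2)
  have hq : r / s < 1 := (div_lt_one hs0).2 hs1
  have h2 : Tendsto (fun n : ℕ => ((n : ℝ) + 1) * (r / s) ^ n) atTop (𝓝 0) := by
    have e1 := tendsto_self_mul_const_pow_of_lt_one (div_nonneg hr0 hs0.le) hq
    have e2 := tendsto_pow_atTop_nhds_zero_of_lt_one (div_nonneg hr0 hs0.le) hq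
    simpa [add_mul] using e1.add e2
  refine Summable.of_norm_bounded_eventually_nat (h1.mul_left s⁻¹) ?_
  filter_upwards [h2.eventually_le_const zero_lt_one] with n hn
  have h3 : ‖(n : ℂ) + 1‖ = n + 1 := by
    rw [← Nat.cast_succ, Complex.norm_natCast]; simp
  have h4 : r ^ n = (r / s) ^ n * s ^ n := by
    rw [← mul_pow, div_mul_cancel₀ _ hs0.ne']
  rw [norm_mul, norm_norm, norm_mul, h3, norm_pow, Real.norm_of_nonneg hr0, h4, pow_succ]
  have h6 : 0 ≤ ‖A (n + 1)‖ * s ^ n := by positivity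
  have h7 : s⁻¹ * (‖A (n + 1)‖ * (s ^ n * s)) = ‖A (n + 1)‖ * s ^ n := by field_simp
  rw [h7]
  nlinarith [mul_le_mul_of_nonneg_right hn h6]

/-- Termwise differentiation inside the unit disc. -/
lemma UnitSummable.hasDerivAt {A : ℕ → ℂ} (hA : UnitSummable A) {w : ℂ} (hw : ‖w‖ < 1) :
    HasDerivAt (fun w => ∑' n, A n * w ^ n) (∑' n : ℕ, ((n + 1) * A (n + 1)) * w ^ n) w := by
  obtain ⟨r, hr1, hr2⟩ := exists_between hw
  have hr0 : 0 ≤ r := (norm_nonneg w).trans hr1.le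
  have hu : Summable fun n : ℕ => ‖(n : ℂ) * A n‖ * r ^ (n - 1) := by
    rw [← summable_nat_add_iff 1]
    simpa using hA.deriv r hr0 hr2
  have key := hasDerivAt_tsum_of_isPreconnected (𝕜 := ℂ) hu Metric.isOpen_ball
    (convex_ball (0 : ℂ) r).isPreconnected
    (g := fun n w => A n * w ^ n) (g' := fun n w => A n * (n * w ^ (n - 1)))
    (fun n y _ => (hasDerivAt_pow n y).const_mul _) (fun n y hy => by
      have hy : ‖y‖ ≤ r := by simpa using (Metric.mem_ball.1 hy).le
      have : ‖y‖ ^ (n - 1) ≤ r ^ (n - 1) := by gcongr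
      simp only [norm_mul, norm_pow]
      have h : 0 ≤ ‖(n : ℂ)‖ * ‖A n‖ := by positivity
      nlinarith [mul_le_mul_of_nonneg_left this h])
    (y₀ := 0) (y := w) (by simpa using (norm_nonneg w).trans_lt hr1)
    (hA.summable (by simp)) (by simpa using hr1)
  have hs : Summable fun n : ℕ => A n * (n * w ^ (n - 1)) := by
    rw [← summable_nat_add_iff 1]
    refine (hA.deriv.summable hw).congr fun n => ?_
    simp; ring
  have heq : ∑' n : ℕ, ((n + 1) * A (n + 1)) * w ^ n = ∑' n : ℕ, A n * (n * w ^ (n - 1)) := by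
    rw [hs.tsum_eq_zero_add]
    simp only [Nat.cast_zero, zero_mul, mul_zero, zero_add, Nat.add_sub_cancel]
    refine tsum_congr fun n => ?_
    push_cast; ring
  rw [heq]
  exact key

/-- The Taylor coefficients of `w f'(w)` are `n A n`. -/
lemma UnitSummable.mul_deriv {A : ℕ → ℂ} (hA : UnitSummable A) {w : ℂ} (hw : ‖w‖ < 1) :
    HasSum (fun n : ℕ => (n * A n) * w ^ n) (w * ∑' n : ℕ, ((n + 1) * A (n + 1)) * w ^ n) := by
  have h := ((hA.deriv.summable hw).hasSum).mul_left w
  rw [← hasSum_nat_add_iff' 1]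
  simp only [Finset.range_one, Finset.sum_singleton, Nat.cast_zero, zero_mul, sub_zero]
  refine h.congr_fun fun n => ?_
  push_cast; ring

/-- `y` solves the hypergeometric equation with parameters `a, b, c` on `(0,1)`, with first and
second derivatives `y'` and `y''`. -/
def SolvesHyp (a b c : ℂ) (y y' y'' : ℝ → ℂ) : Prop :=
  ∀ t ∈ Ioo (0 : ℝ) 1, HasDerivAt y (y' t) t ∧ HasDerivAt y' (y'' t) t ∧
    (t : ℂ) * (1 - t) * y'' t + (c - (a + b + 1) * t) * y' t - a * b * y t = 0

/-- `₂F₁` solves its differential equation on the open unit disc. -/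
lemma hyp2F1_ode (a b : ℂ) {c : ℂ} (hc : 0 < c.re) :
    ∃ f' f'' : ℂ → ℂ, ∀ w : ℂ, ‖w‖ < 1 → HasDerivAt (hyp2F1 a b c) (f' w) w ∧
      HasDerivAt f' (f'' w) w ∧
      w * (1 - w) * f'' w + (c - (a + b + 1) * w) * f' w - a * b * hyp2F1 a b c w = 0 := by
  have hA := unitSummable_hypCoeff a b hc
  set A := hypCoeff a b c with hAdef
  set D : ℕ → ℂ := fun n => (n + 1) * A (n + 1) with hD
  refine ⟨fun w => ∑' n, D n * w ^ n, fun w => ∑' n : ℕ, ((n + 1) * D (n + 1)) * w ^ n,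
    fun w hw => ⟨hA.hasDerivAt hw, hA.deriv.hasDerivAt hw, ?_⟩⟩
  have s0 : HasSum (fun n => A n * w ^ n) (hyp2F1 a b c w) := (hA.summable hw).hasSum
  have s1 := (hA.deriv.summable hw).hasSum
  have s2 := hA.mul_deriv hw
  have s3 := hA.deriv.mul_deriv hw
  -- the coefficients of `w² f''` are `n (n - 1) A n`
  have s4 : HasSum (fun n : ℕ => ((n * (n - 1) * A n)) * w ^ n)
      (w * (w * ∑' n : ℕ, ((n + 1) * D (n + 1)) * w ^ n)) := by
    have h := s3.mul_left w
    rw [← hasSum_nat_add_iff' 1]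
    simp only [Finset.range_one, Finset.sum_singleton, Nat.cast_zero, zero_mul, sub_zero]
    refine h.congr_fun fun n => ?_
    push_cast; ring
  have tot := (((s3.sub s4).add (s1.mul_left c)).sub (s2.mul_left (a + b + 1))).sub
    (s0.mul_left (a * b))
  have z : HasSum (fun _ : ℕ => (0 : ℂ)) 0 := hasSum_zero
  have := tot.unique (z.congr_fun ?_)
  · linear_combination this
  · intro n
    have h := hypCoeff_succ (a := a) (b := b) hc n
    rw [← hAdef] at h
    linear_combination w ^ n * h

/-! ### Solutions on the unit interval and their Wronskian -/

lemma norm_ofReal_lt_one {t : ℝ} (ht : t ∈ Ioo (0 : ℝ) 1) : ‖(t : ℂ)‖ < 1 := by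
  rw [Complex.norm_real, Real.norm_of_nonneg ht.1.le]; exact ht.2

lemma solvesHyp_hyp2F1 (a b : ℂ) {c : ℂ} (hc : 0 < c.re) :
    ∃ y' y'', SolvesHyp a b c (fun t => hyp2F1 a b c t) y' y'' := by
  obtain ⟨f', f'', h⟩ := hyp2F1_ode a b hc
  refine ⟨fun t => f' t, fun t => f'' t, fun t ht => ?_⟩
  obtain ⟨h1, h2, h3⟩ := h t (norm_ofReal_lt_one ht)
  exact ⟨h1.comp_ofReal, h2.comp_ofReal, h3⟩

/-- The solution regular at `t = 1`. -/
lemma solvesHyp_one_sub (a b c : ℂ) (hc : 0 < (a + b + 1 - c).re) :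
    ∃ y' y'', SolvesHyp a b c (fun t => hyp2F1 a b (a + b + 1 - c) ((1 - t : ℝ) : ℂ)) y' y'' := by
  obtain ⟨f', f'', h⟩ := hyp2F1_ode a b hc
  refine ⟨fun t => -f' ((1 - t : ℝ) : ℂ), fun t => f'' ((1 - t : ℝ) : ℂ), fun t ht => ?_⟩
  obtain ⟨h1, h2, h3⟩ := h ((1 - t : ℝ) : ℂ)
    (norm_ofReal_lt_one ⟨by linarith [ht.2], by linarith [ht.1]⟩)
  have hs : HasDerivAt (fun t : ℝ => 1 - t) (-1) t := by
    simpa using (hasDerivAt_id t).const_sub 1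
  refine ⟨?_, ?_, ?_⟩
  · have := HasDerivAt.scomp t h1.comp_ofReal hs
    simpa [Function.comp_def] using this
  · have := (HasDerivAt.scomp t h2.comp_ofReal hs).neg
    simpa [Function.comp_def] using! this
  · push_cast at h3 ⊢
    linear_combination h3

/-- The second Frobenius solution at `t = 0`, with exponent `s = 1 - c`. -/
lemma solvesHyp_cpow (a b c s : ℂ) (hs : s = 1 - c) (hc : 0 < (1 + s).re) :
    ∃ y' y'', SolvesHyp a b c
      (fun t => (t : ℂ) ^ s * hyp2F1 (a + s) (b + s) (1 + s) t) y' y'' := by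
  obtain ⟨f', f'', h⟩ := solvesHyp_hyp2F1 (a + s) (b + s) hc
  set G : ℝ → ℂ := fun t => hyp2F1 (a + s) (b + s) (1 + s) t with hG
  have hP : ∀ s : ℂ, ∀ t ∈ Ioo (0 : ℝ) 1,
      HasDerivAt (fun t : ℝ => (t : ℂ) ^ s) (s * (t : ℂ) ^ (s - 1)) t := by
    intro s t ht
    have h0 : (t : ℂ) ∈ Complex.slitPlane := Complex.ofReal_mem_slitPlane.2 ht.1
    simpa using ((hasDerivAt_id (t : ℂ)).cpow_const (c := s) h0).comp_ofReal
  refine ⟨fun t => s * (t : ℂ) ^ (s - 1) * G t + (t : ℂ) ^ s * f' t,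
    fun t => (s * ((s - 1) * (t : ℂ) ^ (s - 1 - 1)) * G t + s * (t : ℂ) ^ (s - 1) * f' t) +
      (s * (t : ℂ) ^ (s - 1) * f' t + (t : ℂ) ^ s * f'' t), fun t ht => ?_⟩
  obtain ⟨h1, h2, h3⟩ := h t ht
  refine ⟨(hP s t ht).mul h1,
    ((((hP (s - 1) t ht).const_mul s)).mul h1).add ((hP s t ht).mul h2), ?_⟩
  have h0 : (t : ℂ) ≠ 0 := by exact_mod_cast ht.1.ne'
  beta_reduce
  rw [Complex.cpow_sub _ _ h0, Complex.cpow_sub _ _ h0, Complex.cpow_one]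
  change _ + _ - a * b * ((t : ℂ) ^ s * G t) = 0
  change _ + _ - (a + s) * (b + s) * G t = 0 at h3
  obtain rfl : c = 1 - s := by rw [hs]; ring
  field_simp
  linear_combination (t : ℂ) ^ s * t * h3

lemma SolvesHyp.sub_const_mul {a b c : ℂ} {u u' u'' v v' v'' : ℝ → ℂ}
    (hu : SolvesHyp a b c u u' u'') (hv : SolvesHyp a b c v v' v'') (k : ℂ) :
    SolvesHyp a b c (fun t => u t - k * v t) (fun t => u' t - k * v' t)
      (fun t => u'' t - k * v'' t) := by
  intro t ht
  obtain ⟨h1, h2, h3⟩ := hu t ht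
  obtain ⟨g1, g2, g3⟩ := hv t ht
  refine ⟨h1.sub (g1.const_mul k), h2.sub (g2.const_mul k), ?_⟩
  linear_combination h3 - k * g3

/-- Abel's identity: `t^(1+β) (1-t)^(1+α)` times the Wronskian of two solutions is constant. -/
lemma SolvesHyp.wronskian {a b : ℂ} {α β : ℝ} (hab : a + b = ((1 + α + β : ℝ) : ℂ))
    {u u' u'' v v' v'' : ℝ → ℂ} (hu : SolvesHyp a b (1 + β) u u' u'')
    (hv : SolvesHyp a b (1 + β) v v' v'') :
    ∃ C : ℂ, ∀ t ∈ Ioo (0 : ℝ) 1,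
      ((t ^ (1 + β) * (1 - t) ^ (1 + α) : ℝ) : ℂ) * (u' t * v t - u t * v' t) = C := by
  have hp : ∀ t ∈ Ioo (0 : ℝ) 1, HasDerivAt (fun t : ℝ => t ^ (1 + β) * (1 - t) ^ (1 + α))
      (((1 + β) * t ^ (1 + β - 1)) * (1 - t) ^ (1 + α) +
        t ^ (1 + β) * (-1 * (1 + α) * (1 - t) ^ (1 + α - 1))) t := by
    intro t ht
    have hs : HasDerivAt (fun t : ℝ => 1 - t) (-1) t := by
      simpa using (hasDerivAt_id t).const_sub 1
    have h1 : HasDerivAt (fun t : ℝ => t ^ (1 + β)) ((1 + β) * t ^ (1 + β - 1)) t :=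
      Real.hasDerivAt_rpow_const (Or.inl ht.1.ne')
    have h2 := hs.rpow_const (p := 1 + α) (Or.inl (by linarith [ht.2]))
    exact h1.mul h2
  have hd : ∀ t ∈ Ioo (0 : ℝ) 1, HasDerivAt (fun t : ℝ =>
      ((t ^ (1 + β) * (1 - t) ^ (1 + α) : ℝ) : ℂ) * (u' t * v t - u t * v' t)) 0 t := by
    intro t ht
    obtain ⟨h1, h2, h3⟩ := hu t ht
    obtain ⟨g1, g2, g3⟩ := hv t ht
    refine (((hp t ht).ofReal_comp).mul ((h2.mul g1).sub (h1.mul g2))).congr_deriv ?_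
    simp only [Pi.mul_apply, Pi.sub_apply]
    have ht1 : 0 < 1 - t := by linarith [ht.2]
    rw [Real.rpow_sub_one ht.1.ne', Real.rpow_sub_one ht1.ne']
    have e0 : (t : ℂ) ≠ 0 := by exact_mod_cast ht.1.ne'
    have e1 : (1 : ℂ) - t ≠ 0 := by exact_mod_cast ht1.ne'
    set P : ℝ := t ^ (1 + β)
    set Q : ℝ := (1 - t) ^ (1 + α)
    push_cast at hab ⊢
    field_simp
    simp only [hab] at h3 g3
    linear_combination ((P : ℂ) * Q) * (v t * h3 - u t * g3)
  exact ⟨_, fun t ht => IsOpen.is_const_of_deriv_eq_zero isOpen_Ioo isPreconnected_Ioo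
    (fun x hx => (hd x hx).differentiableAt.differentiableWithinAt) (fun x hx => (hd x hx).deriv)
    ht (⟨by norm_num, by norm_num⟩ : (1 / 2 : ℝ) ∈ Ioo (0 : ℝ) 1)⟩

/-! ### Leading behaviour at the right endpoint -/

lemma cpoch_ofReal (α : ℝ) (n : ℕ) :
    cpoch α n = ((∏ j ∈ Finset.range n, (α + j) : ℝ) : ℂ) := by
  simp [cpoch]

/-- The Taylor coefficients `(α)_n / n!` of `(1-t)^(-α)`. -/
noncomputable def binCoeff (α : ℝ) (n : ℕ) : ℝ :=
  (∏ j ∈ Finset.range n, (α + j)) / n.factorial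

lemma binCoeff_pos {α : ℝ} (hα : 0 < α) (n : ℕ) : 0 < binCoeff α n := by
  unfold binCoeff
  have : 0 < ∏ j ∈ Finset.range n, (α + (j : ℝ)) := Finset.prod_pos fun j _ => by positivity
  positivity

lemma choose_eq_binCoeff (α : ℝ) (n : ℕ) : Ring.choose (α + n - 1) n = binCoeff α n := by
  have h2 := Ring.factorial_nsmul_multichoose_eq_ascPochhammer α n
  rw [← Ring.multichoose_eq, binCoeff, eq_div_iff (by positivity), mul_comm, ← nsmul_eq_mul, h2,
    Polynomial.ascPochhammer_smeval_eq_eval]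
  clear h2
  induction n with
  | zero => simp
  | succ n ih => rw [ascPochhammer_succ_eval, ih, Finset.prod_range_succ]

lemma hasSum_binCoeff (α : ℝ) {t : ℝ} (ht : t ∈ Ioo (0 : ℝ) 1) :
    HasSum (fun n => binCoeff α n * t ^ n) (((1 - t) ^ α)⁻¹) := by
  have h := (Real.one_div_one_sub_rpow_hasFPowerSeriesOnBall_zero α).hasSum (y := t)
    (by
      rw [Metric.mem_eball, edist_zero_right, ← ofReal_norm, Real.norm_of_nonneg ht.1.le]
      exact ENNReal.ofReal_lt_one.2 ht.2)
  simpa [choose_eq_binCoeff, FormalMultilinearSeries.ofScalars_apply_eq, mul_comm] using h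

/-- The Pochhammer symbol in terms of the approximants in the Gauss limit formula for `Γ`. -/
lemma cpoch_succ_eq_div_GammaSeq {s : ℂ} (hs : ∀ n : ℕ, s + n ≠ 0) {n : ℕ} (hn : n ≠ 0) :
    cpoch s (n + 1) = (n : ℂ) ^ s * n.factorial / Complex.GammaSeq s n := by
  have h1 := cpoch_ne_zero hs (n + 1)
  have h2 : (n : ℂ) ^ s ≠ 0 := by simp [Complex.cpow_eq_zero_iff, hn]
  have h3 : (n.factorial : ℂ) ≠ 0 := by exact_mod_cast n.factorial_ne_zero
  rw [Complex.GammaSeq]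
  change _ = _ / (_ / cpoch s (n + 1))
  field_simp

lemma tendsto_hypCoeff_div {a b c : ℂ} {α : ℝ} (hα : 0 < α) (h : a + b = c + α)
    (hc : 0 < c.re) (ha : ∀ n : ℕ, a + n ≠ 0) (hb : ∀ n : ℕ, b + n ≠ 0) :
    Tendsto (fun n => hypCoeff a b c n / binCoeff α n) atTop
      (𝓝 (Complex.Gamma c * Complex.Gamma α / (Complex.Gamma a * Complex.Gamma b))) := by
  have hGa : Complex.Gamma a ≠ 0 := Complex.Gamma_ne_zero fun m hm => ha m (by rw [hm]; ring)
  have hGb : Complex.Gamma b ≠ 0 := Complex.Gamma_ne_zero fun m hm => hb m (by rw [hm]; ring)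
  have hc' := add_natCast_ne_zero hc
  have hα' := add_natCast_ne_zero (c := (α : ℂ)) (by simpa using hα)
  have hlim := ((Complex.GammaSeq_tendsto_Gamma c).mul (Complex.GammaSeq_tendsto_Gamma α)).div
    ((Complex.GammaSeq_tendsto_Gamma a).mul (Complex.GammaSeq_tendsto_Gamma b))
    (mul_ne_zero hGa hGb)
  rw [← tendsto_add_atTop_iff_nat 1]
  refine hlim.congr' ?_
  filter_upwards [eventually_ne_atTop 0] with n hn
  have hn' : (n : ℂ) ≠ 0 := by exact_mod_cast hn
  have h3 : (n.factorial : ℂ) ≠ 0 := by exact_mod_cast n.factorial_ne_zero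
  have h3' : ((n + 1).factorial : ℂ) ≠ 0 := by exact_mod_cast (n + 1).factorial_ne_zero
  have hpow : (n : ℂ) ^ a * (n : ℂ) ^ b = (n : ℂ) ^ c * (n : ℂ) ^ (α : ℂ) := by
    rw [← Complex.cpow_add _ _ hn', ← Complex.cpow_add _ _ hn', h]
  have hp : ∀ s : ℂ, (n : ℂ) ^ s ≠ 0 := fun s => by simp [Complex.cpow_eq_zero_iff, hn]
  have e1 : ((binCoeff α (n + 1) : ℝ) : ℂ) = cpoch α (n + 1) / (n + 1).factorial := by
    rw [cpoch_ofReal, binCoeff]; push_cast; rfl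
  have hg : ∀ s : ℂ, (∀ n : ℕ, s + n ≠ 0) → Complex.GammaSeq s n ≠ 0 := fun s hs =>
    div_ne_zero (mul_ne_zero (hp s) h3) (cpoch_ne_zero hs (n + 1))
  rw [e1, hypCoeff, cpoch_succ_eq_div_GammaSeq ha hn, cpoch_succ_eq_div_GammaSeq hb hn,
    cpoch_succ_eq_div_GammaSeq hc' hn, cpoch_succ_eq_div_GammaSeq hα' hn]
  simp only [Pi.div_apply]
  have g1 := hg a ha
  have g2 := hg b hb
  have g3 := hg c hc'
  have g4 := hg α hα'
  have p1 := hp a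
  have p2 := hp b
  have p3 := hp c
  have p4 := hp α
  field_simp
  linear_combination -hpow

/-- An Abelian theorem: if `A n / B n → K` for the coefficients `B n` of `(1-t)^(-α)`, then
`∑ A n t^n` is asymptotic to `K (1-t)^(-α)` as `t → 1`. -/
lemma tendsto_abelian {A : ℕ → ℂ} (hA : UnitSummable A) {α : ℝ} (hα : 0 < α) {K : ℂ}
    (hK : Tendsto (fun n => A n / binCoeff α n) atTop (𝓝 K)) :
    Tendsto (fun t : ℝ => (((1 - t) ^ α : ℝ) : ℂ) * ∑' n, A n * (t : ℂ) ^ n) (𝓝[<] 1) (𝓝 K) := by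
  rw [Metric.tendsto_nhds]
  intro ε hε
  obtain ⟨N, hN⟩ := eventually_atTop.1 (Metric.tendsto_nhds.1 hK (ε / 2) (half_pos hε))
  set D : ℝ := ∑ n ∈ Finset.range N, ‖A n - K * binCoeff α n‖ with hD
  have hzero : Tendsto (fun t : ℝ => D * (1 - t) ^ α) (𝓝[<] 1) (𝓝 0) := by
    have : ContinuousAt (fun t : ℝ => D * (1 - t) ^ α) 1 :=
      continuousAt_const.mul ((continuousAt_const.sub continuousAt_id).rpow_const (Or.inr hα.le))
    have h2 := this.tendsto
    simp only [sub_self, Real.zero_rpow hα.ne', mul_zero] at h2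
    exact h2.mono_left nhdsWithin_le_nhds
  filter_upwards [hzero.eventually_lt_const (half_pos hε),
    Ioo_mem_nhdsLT (zero_lt_one' ℝ)] with t htD ht
  have ht1 : 0 < 1 - t := by linarith [ht.2]
  have hq : 0 < (1 - t) ^ α := Real.rpow_pos_of_pos ht1 _
  have hB := hasSum_binCoeff α ht
  have hBc : HasSum (fun n => (binCoeff α n : ℂ) * (t : ℂ) ^ n) (((((1 - t) ^ α)⁻¹ : ℝ)) : ℂ) := by
    exact_mod_cast Complex.hasSum_ofReal.2 hB
  have hAs := (hA.summable (norm_ofReal_lt_one ht)).hasSum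
  have hdiff := hAs.sub (hBc.mul_left K)
  -- the terms of index `< N` contribute at most `D`, the others at most `ε/2` of the majorant
  have hterm : ∀ n, ‖A n * (t : ℂ) ^ n - K * ((binCoeff α n : ℂ) * (t : ℂ) ^ n)‖ ≤
      (if n ∈ Finset.range N then ‖A n - K * binCoeff α n‖ else 0) +
        ε / 2 * (binCoeff α n * t ^ n) := by
    intro n
    have hb := binCoeff_pos hα n
    have e : A n * (t : ℂ) ^ n - K * ((binCoeff α n : ℂ) * (t : ℂ) ^ n) =
      (A n - K * binCoeff α n) * (t : ℂ) ^ n := by ring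
    have htn : 0 ≤ t ^ n := pow_nonneg ht.1.le n
    rw [e, norm_mul, norm_pow, Complex.norm_real, Real.norm_of_nonneg ht.1.le]
    split_ifs with hn
    · have : t ^ n ≤ 1 := pow_le_one₀ ht.1.le ht.2.le
      have h1 : 0 ≤ ε / 2 * (binCoeff α n * t ^ n) := by positivity
      nlinarith [mul_le_mul_of_nonneg_left this (norm_nonneg (A n - K * binCoeff α n))]
    · have h1 := (hN n (by simpa using hn)).le
      have hbc : (binCoeff α n : ℂ) ≠ 0 := by exact_mod_cast hb.ne'
      have h2 : A n - K * binCoeff α n = (A n / binCoeff α n - K) * binCoeff α n := by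
        field_simp
      rw [dist_eq_norm] at h1
      rw [h2, norm_mul, Complex.norm_real, Real.norm_of_nonneg hb.le, zero_add, mul_assoc]
      exact mul_le_mul_of_nonneg_right h1 (by positivity)
  have hsum : HasSum (fun n => (if n ∈ Finset.range N then ‖A n - K * binCoeff α n‖ else 0) +
        ε / 2 * (binCoeff α n * t ^ n)) (D + ε / 2 * ((1 - t) ^ α)⁻¹) := by
    refine HasSum.add ?_ (hB.mul_left _)
    have := hasSum_sum_of_ne_finset_zero (L := .unconditional ℕ) (s := Finset.range N)
      (f := fun n => if n ∈ Finset.range N then ‖A n - K * binCoeff α n‖ else 0)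
      (fun n hn => if_neg hn)
    convert this using 1
    exact Finset.sum_congr rfl fun n hn => (if_pos hn).symm
  have hle := tsum_of_norm_bounded hsum hterm
  rw [hdiff.tsum_eq] at hle
  have hqc : (((1 - t) ^ α : ℝ) : ℂ) ≠ 0 := by exact_mod_cast hq.ne'
  have e2 : (((1 - t) ^ α : ℝ) : ℂ) * ∑' n, A n * (t : ℂ) ^ n - K =
      (((1 - t) ^ α : ℝ) : ℂ) *
        (∑' n, A n * (t : ℂ) ^ n - K * ((((1 - t) ^ α)⁻¹ : ℝ) : ℂ)) := by
    rw [Complex.ofReal_inv]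
    field_simp
  rw [dist_eq_norm, e2, norm_mul, Complex.norm_real, Real.norm_of_nonneg hq.le]
  calc _ ≤ (1 - t) ^ α * (D + ε / 2 * ((1 - t) ^ α)⁻¹) := by gcongr
    _ = D * (1 - t) ^ α + ε / 2 := by field_simp
    _ < ε := by linarith

/-- The leading behaviour `₂F₁(a,b;c;t) ~ Γ(c)Γ(α)/(Γ(a)Γ(b)) (1-t)^(-α)` at `t = 1`, for
`α = a + b - c > 0`. -/
lemma tendsto_hyp2F1 {a b c : ℂ} {α : ℝ} (hα : 0 < α) (h : a + b = c + α)
    (hc : 0 < c.re) (ha : ∀ n : ℕ, a + n ≠ 0) (hb : ∀ n : ℕ, b + n ≠ 0) :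
    Tendsto (fun t : ℝ => (((1 - t) ^ α : ℝ) : ℂ) * hyp2F1 a b c t) (𝓝[<] 1)
      (𝓝 (Complex.Gamma c * Complex.Gamma α / (Complex.Gamma a * Complex.Gamma b))) :=
  tendsto_abelian (unitSummable_hypCoeff a b hc) hα (tendsto_hypCoeff_div hα h hc ha hb)

/-! ### Boundedness and square integrability near the right endpoint -/

lemma tendsto_one_sub_rpow {α : ℝ} (hα : 0 < α) :
    Tendsto (fun t : ℝ => (1 - t) ^ α) (𝓝[<] 1) (𝓝 0) := by
  have : ContinuousAt (fun t : ℝ => (1 - t) ^ α) 1 :=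
    (continuousAt_const.sub continuousAt_id).rpow_const (Or.inr hα.le)
  have h2 := this.tendsto
  simp only [sub_self, Real.zero_rpow hα.ne'] at h2
  exact h2.mono_left nhdsWithin_le_nhds

/-- A solution which is `o((1-t)^(-α))` at `1` is bounded there: its Wronskian with the regular
solution `v` must vanish, since otherwise `(y/v)'` would be comparable to `(1-t)^(-α-1)`. -/
lemma SolvesHyp.bounded_of_tendsto_zero {a b : ℂ} {α β : ℝ} (hα : 0 < α) (hβ : -1 < β)
    (hab : a + b = ((1 + α + β : ℝ) : ℂ))
    {y y' y'' v v' v'' : ℝ → ℂ} (hy : SolvesHyp a b (1 + β) y y' y'')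
    (hv : SolvesHyp a b (1 + β) v v' v'') (hv1 : Tendsto v (𝓝[<] 1) (𝓝 1))
    (hy0 : Tendsto (fun t : ℝ => (((1 - t) ^ α : ℝ) : ℂ) * y t) (𝓝[<] 1) (𝓝 0)) :
    ∃ M : ℝ, ∀ᶠ t in 𝓝[<] 1, ‖y t‖ ≤ M := by
  obtain ⟨C, hC⟩ := hy.wronskian hab hv
  have hre : Tendsto (fun t => (((v t) ^ 2)⁻¹).re) (𝓝[<] 1) (𝓝 1) := by
    have := Complex.continuous_re.continuousAt.tendsto.comp ((hv1.pow 2).inv₀ (by norm_num))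
    simpa [Function.comp_def] using this
  have hnv : Tendsto (fun t => ‖v t‖) (𝓝[<] 1) (𝓝 1) := by simpa using hv1.norm
  obtain ⟨t₀, ht₀, hsub⟩ := (mem_nhdsLT_iff_exists_mem_Ico_Ioo_subset (zero_lt_one' ℝ)).1
    ((hre.eventually_const_le (by norm_num : (1 / 2 : ℝ) < 1)).and
      (hnv.eventually_le_const (by norm_num : (1 : ℝ) < 2)))
  have h01 : ∀ t ∈ Ioo t₀ 1, t ∈ Ioo (0 : ℝ) 1 := fun t ht => ⟨ht₀.1.trans_lt ht.1, ht.2⟩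
  have hv0 : ∀ t ∈ Ioo t₀ 1, v t ≠ 0 := by
    intro t ht h0
    have := (hsub ht).1
    norm_num [h0] at this
  have hq : ∀ t ∈ Ioo t₀ 1, HasDerivAt (fun t => y t / v t)
      (C * (((t ^ (1 + β) * (1 - t) ^ (1 + α))⁻¹ : ℝ) : ℂ) * ((v t) ^ 2)⁻¹) t := by
    intro t ht
    have h := h01 t ht
    refine ((hy t h).1.div (hv t h).1 (hv0 t ht)).congr_deriv ?_
    have hp : 0 < t ^ (1 + β) * (1 - t) ^ (1 + α) :=
      mul_pos (Real.rpow_pos_of_pos h.1 _) (Real.rpow_pos_of_pos (by linarith [h.2]) _)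
    have hpc : ((t ^ (1 + β) * (1 - t) ^ (1 + α) : ℝ) : ℂ) ≠ 0 := by exact_mod_cast hp.ne'
    rw [← hC t h, Complex.ofReal_inv]
    have := hv0 t ht
    field_simp
  have ht₁ : (t₀ + 1) / 2 ∈ Ioo t₀ 1 := ⟨by linarith [ht₀.2], by linarith [ht₀.2]⟩
  set t₁ := (t₀ + 1) / 2
  by_cases hC0 : C = 0
  · refine ⟨‖y t₁ / v t₁‖ * 2, ?_⟩
    filter_upwards [Ioo_mem_nhdsLT ht₀.2] with t ht
    have hconst : y t / v t = y t₁ / v t₁ :=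
      IsOpen.is_const_of_deriv_eq_zero isOpen_Ioo isPreconnected_Ioo
        (fun x hx => (hq x hx).differentiableAt.differentiableWithinAt)
        (fun x hx => by simpa [hC0] using (hq x hx).deriv) ht ht₁
    have e : y t = (y t / v t) * v t := by field_simp [hv0 t ht]
    rw [e, hconst, norm_mul]
    exact mul_le_mul_of_nonneg_left (hsub ht).2 (norm_nonneg _)
  · exfalso
    set h : ℝ → ℝ := fun t => (C⁻¹ * (y t / v t)).re - 1 / (2 * α) * (1 - t) ^ (-α) with hh
    have hder : ∀ t ∈ Ioo t₀ 1, HasDerivAt h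
        ((t ^ (1 + β) * (1 - t) ^ (1 + α))⁻¹ * (((v t) ^ 2)⁻¹).re
          - 1 / 2 * ((1 - t) ^ (1 + α))⁻¹) t := by
      intro t ht
      have ht1 : 0 < 1 - t := by linarith [ht.2]
      have hs : HasDerivAt (fun t : ℝ => 1 - t) (-1) t := by
        simpa using (hasDerivAt_id t).const_sub 1
      have d1 := (hs.rpow_const (p := -α) (Or.inl ht1.ne')).const_mul (1 / (2 * α))
      have d2 := (Complex.reCLM.hasFDerivAt.comp_hasDerivAt t ((hq t ht).const_mul C⁻¹))
      refine (d2.sub d1).congr_deriv ?_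
      congr 1
      · have : C⁻¹ * (C * (((t ^ (1 + β) * (1 - t) ^ (1 + α))⁻¹ : ℝ) : ℂ) * ((v t) ^ 2)⁻¹) =
            (((t ^ (1 + β) * (1 - t) ^ (1 + α))⁻¹ : ℝ) : ℂ) * ((v t) ^ 2)⁻¹ := by
          field_simp
        rw [this, Complex.reCLM_apply, Complex.re_ofReal_mul]
      · rw [show -α - 1 = -(1 + α) by ring, Real.rpow_neg ht1.le]
        field_simp
    have hmono : MonotoneOn h (Ioo t₀ 1) := by
      refine monotoneOn_of_deriv_nonneg (convex_Ioo _ _)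
        (fun t ht => (hder t ht).continuousAt.continuousWithinAt) ?_ ?_
      · rw [interior_Ioo]
        exact fun t ht => (hder t ht).differentiableAt.differentiableWithinAt
      · rw [interior_Ioo]
        intro t ht
        rw [(hder t ht).deriv]
        have h := h01 t ht
        have ht1 : 0 < (1 - t) ^ (1 + α) := Real.rpow_pos_of_pos (by linarith [ht.2]) _
        have htp : 0 < t ^ (1 + β) := Real.rpow_pos_of_pos h.1 _
        have htp1 : t ^ (1 + β) ≤ 1 := Real.rpow_le_one h.1.le h.2.le (by linarith)
        have hr : 1 / 2 ≤ (((v t) ^ 2)⁻¹).re := (hsub ht).1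
        have : ((1 - t) ^ (1 + α))⁻¹ ≤ (t ^ (1 + β) * (1 - t) ^ (1 + α))⁻¹ := by
          apply inv_anti₀ (by positivity)
          nlinarith
        have h0 : 0 < ((1 - t) ^ (1 + α))⁻¹ := by positivity
        nlinarith
    have hlimL : Tendsto (fun t : ℝ => (C⁻¹ * (((((1 - t) ^ α : ℝ) : ℂ) * y t) / v t)).re)
        (𝓝[<] 1) (𝓝 0) := by
      have := Complex.continuous_re.continuousAt.tendsto.comp
        ((hy0.div hv1 one_ne_zero).const_mul C⁻¹)
      simpa [Function.comp_def] using this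
    have hlimR : Tendsto (fun t : ℝ => 1 / (2 * α) + h t₁ * (1 - t) ^ α)
        (𝓝[<] 1) (𝓝 (1 / (2 * α))) := by
      simpa using ((tendsto_one_sub_rpow hα).const_mul (h t₁)).const_add (1 / (2 * α))
    have hle : 1 / (2 * α) ≤ 0 := by
      refine le_of_tendsto_of_tendsto hlimR hlimL ?_
      filter_upwards [Ioo_mem_nhdsLT ht₁.2] with t ht
      have ht' : t ∈ Ioo t₀ 1 := ⟨ht₁.1.trans ht.1, ht.2⟩
      have hm := hmono ht₁ ht' ht.1.le
      have ht1 : 0 < 1 - t := by linarith [ht.2]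
      have hp : 0 < (1 - t) ^ α := Real.rpow_pos_of_pos ht1 _
      have e : C⁻¹ * (((((1 - t) ^ α : ℝ) : ℂ) * y t) / v t) =
          (((1 - t) ^ α : ℝ) : ℂ) * (C⁻¹ * (y t / v t)) := by ring
      rw [e, Complex.re_ofReal_mul]
      have hm' := mul_le_mul_of_nonneg_left hm hp.le
      have e2 : (1 - t) ^ α * h t = (1 - t) ^ α * (C⁻¹ * (y t / v t)).re - 1 / (2 * α) := by
        simp only [hh]
        rw [Real.rpow_neg ht1.le]
        field_simp
      linarith
    have : 0 < 1 / (2 * α) := by positivity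
    linarith

/-- A continuous function on `(0,1)` bounded near `1` gives a weighted square integrable function. -/
lemma integrableOn_of_bounded {α β : ℝ} (hα : 1 ≤ α) (hβ0 : β < 0) {Y : ℝ → ℂ}
    (hY : ContinuousOn Y (Ioo 0 1)) {M : ℝ} (hM : ∀ᶠ t in 𝓝[<] 1, ‖Y t‖ ≤ M) :
    IntegrableOn (fun x : ℝ => ‖Y ((1 + x) / 2)‖ ^ 2 * ((1 - x) ^ α * (1 + x) ^ β))
      (Ioo (0 : ℝ) 1) := by
  obtain ⟨t₀, ht₀, hsub⟩ := (mem_nhdsLT_iff_exists_mem_Ico_Ioo_subset (zero_lt_one' ℝ)).1 hM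
  obtain ⟨M', hM'⟩ := (isCompact_Icc (a := (1 / 2 : ℝ)) (b := t₀)).exists_bound_of_continuousOn
    (hY.mono fun t ht => ⟨by linarith [ht.1], by linarith [ht.2, ht₀.2]⟩)
  have hbd : ∀ t ∈ Ioo (1 / 2 : ℝ) 1, ‖Y t‖ ≤ max M M' := by
    intro t ht
    rcases le_or_gt t t₀ with h | h
    · exact (hM' t ⟨ht.1.le, h⟩).trans (le_max_right _ _)
    · exact (hsub ⟨h, ht.2⟩).trans (le_max_left _ _)
  have hcont : ContinuousOn
      (fun x : ℝ => ‖Y ((1 + x) / 2)‖ ^ 2 * ((1 - x) ^ α * (1 + x) ^ β)) (Ioo 0 1) := by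
    have h1 : ContinuousOn (fun x : ℝ => Y ((1 + x) / 2)) (Ioo 0 1) :=
      hY.comp (by fun_prop) fun x hx => ⟨by linarith [hx.1], by linarith [hx.2]⟩
    refine (h1.norm.pow 2).mul (ContinuousOn.mul ?_ ?_)
    · exact (by fun_prop : ContinuousOn (fun x : ℝ => 1 - x) _).rpow_const
        fun x hx => Or.inl (by linarith [hx.2])
    · exact (by fun_prop : ContinuousOn (fun x : ℝ => 1 + x) _).rpow_const
        fun x hx => Or.inl (by linarith [hx.1])
  refine Integrable.of_bound (hcont.aestronglyMeasurable measurableSet_Ioo) (max M M' ^ 2) ?_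
  refine (ae_restrict_iff' measurableSet_Ioo).2 (ae_of_all _ fun x hx => ?_)
  have hb := hbd ((1 + x) / 2) ⟨by linarith [hx.1], by linarith [hx.2]⟩
  have h1 : (1 - x) ^ α ≤ 1 :=
    Real.rpow_le_one (by linarith [hx.2]) (by linarith [hx.1]) (by linarith)
  have h2 : (1 + x) ^ β ≤ 1 := Real.rpow_le_one_of_one_le_of_nonpos (by linarith [hx.1]) hβ0.le
  have h1' : 0 ≤ (1 - x) ^ α := Real.rpow_nonneg (by linarith [hx.2]) _
  have h2' : 0 ≤ (1 + x) ^ β := Real.rpow_nonneg (by linarith [hx.1]) _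
  rw [Real.norm_of_nonneg (by positivity)]
  have h3 : ‖Y ((1 + x) / 2)‖ ^ 2 ≤ max M M' ^ 2 := by gcongr
  have h4 : (1 - x) ^ α * (1 + x) ^ β ≤ 1 := mul_le_one₀ h1 h2' h2
  nlinarith [mul_le_mul h3 h4 (by positivity) (by positivity)]

/-- A function comparable to `(1-t)^(-α)` at `1` is not weighted square integrable, because the
integrand dominates a multiple of `(1-x)⁻¹`. -/
lemma not_integrableOn_of_tendsto {α β : ℝ} (hα : 1 ≤ α) (hβ : -1 < β) {Y : ℝ → ℂ} {L : ℂ}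
    (hL : L ≠ 0)
    (hY : Tendsto (fun t : ℝ => (((1 - t) ^ α : ℝ) : ℂ) * Y t) (𝓝[<] 1) (𝓝 L)) :
    ¬ IntegrableOn (fun x : ℝ => ‖Y ((1 + x) / 2)‖ ^ 2 * ((1 - x) ^ α * (1 + x) ^ β))
      (Ioo (0 : ℝ) 1) := by
  intro hint
  have hLp : 0 < ‖L‖ := norm_pos_iff.2 hL
  obtain ⟨t₀, ht₀, hsub⟩ := (mem_nhdsLT_iff_exists_mem_Ico_Ioo_subset (zero_lt_one' ℝ)).1
    (hY.norm.eventually_const_le (half_lt_self hLp))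
  set x₀ : ℝ := max 0 (2 * t₀ - 1) with hx₀
  have hx₀1 : x₀ < 1 := max_lt one_pos (by linarith [ht₀.2])
  have hlow : ∀ x ∈ Ioo x₀ 1, ‖(x - 1)⁻¹‖ ≤ (8 / ‖L‖ ^ 2) *
      (‖Y ((1 + x) / 2)‖ ^ 2 * ((1 - x) ^ α * (1 + x) ^ β)) := by
    intro x hx
    have hx0 : 0 < x := (le_max_left _ _).trans_lt hx.1
    have hxt : 2 * t₀ - 1 < x := (le_max_right _ _).trans_lt hx.1
    have hx1 : 0 < 1 - x := by linarith [hx.2]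
    have hs : ‖L‖ / 2 ≤ ‖(((1 - (1 + x) / 2) ^ α : ℝ) : ℂ) * Y ((1 + x) / 2)‖ :=
      hsub (⟨by linarith, by linarith⟩ : (1 + x) / 2 ∈ Ioo t₀ 1)
    set N := ‖Y ((1 + x) / 2)‖ with hN
    have hN0 : 0 ≤ N := norm_nonneg _
    have hP : 0 < (1 - x) ^ α := Real.rpow_pos_of_pos hx1 _
    have hhalf : (1 - (1 + x) / 2) ^ α ≤ (1 - x) ^ α :=
      Real.rpow_le_rpow (by linarith) (by linarith) (by linarith)
    have hhalf0 : 0 ≤ (1 - (1 + x) / 2) ^ α := Real.rpow_nonneg (by linarith) _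
    rw [norm_mul, Complex.norm_real, Real.norm_of_nonneg hhalf0] at hs
    have hs' : ‖L‖ / 2 ≤ (1 - x) ^ α * N := hs.trans (by gcongr)
    have hP1 : (1 - x) ^ α ≤ 1 - x := by
      simpa using Real.rpow_le_rpow_of_exponent_ge hx1 (by linarith) hα
    have hw : 1 / 2 ≤ (1 + x) ^ β := by
      have h1 : (1 + x) ^ (-1 : ℝ) ≤ (1 + x) ^ β :=
        Real.rpow_le_rpow_of_exponent_le (by linarith) hβ.le
      rw [Real.rpow_neg_one] at h1
      refine le_trans ?_ h1
      rw [one_div]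
      exact inv_anti₀ (by linarith) (by linarith [hx.2])
    have hsq : ‖L‖ ^ 2 / 4 ≤ ((1 - x) ^ α * N) ^ 2 := by nlinarith
    have key : ‖L‖ ^ 2 / 8 ≤ (1 - x) * (N ^ 2 * ((1 - x) ^ α * (1 + x) ^ β)) := by
      set P := (1 - x) ^ α
      have k1 : P * (N ^ 2 * (P * (1 / 2))) ≤ (1 - x) * (N ^ 2 * (P * (1 + x) ^ β)) := by
        gcongr
      nlinarith
    rw [norm_inv, Real.norm_eq_abs, abs_sub_comm, abs_of_pos hx1]
    rw [inv_le_iff_one_le_mul₀ hx1]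
    have e : 8 / ‖L‖ ^ 2 * (N ^ 2 * ((1 - x) ^ α * (1 + x) ^ β)) * (1 - x) =
        ((1 - x) * (N ^ 2 * ((1 - x) ^ α * (1 + x) ^ β))) / (‖L‖ ^ 2 / 8) := by
      field_simp
    rw [e, le_div_iff₀ (by positivity), one_mul]
    exact key
  have hint' : IntegrableOn (fun x : ℝ => (x - 1)⁻¹) (Ioo x₀ 1) := by
    refine Integrable.mono' ((hint.mono_set
      (Ioo_subset_Ioo_left (le_max_left _ _))).const_mul (8 / ‖L‖ ^ 2)) ?_ ?_
    · exact ((measurable_id.sub_const 1).inv).aestronglyMeasurable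
    · exact (ae_restrict_iff' measurableSet_Ioo).2 (ae_of_all _ hlow)
  have hii : IntervalIntegrable (fun x : ℝ => (x - 1)⁻¹) volume x₀ 1 :=
    (intervalIntegrable_iff_integrableOn_Ioo_of_le hx₀1.le).2 hint'
  rcases intervalIntegrable_sub_inv_iff.1 hii with h | h
  · exact hx₀1.ne h
  · exact h right_mem_uIcc

/-! ### Non-real parameters and the regular solution -/

lemma sigmaAB_im_ne_zero (α β : ℝ) {z : ℂ} (hz : z.im ≠ 0) : (sigmaAB α β z).im ≠ 0 := by
  intro h
  have hsq : sigmaAB α β z ^ 2 = ((1 + α + β : ℝ) : ℂ) ^ 2 + 4 * z := by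
    rw [sigmaAB, one_div]
    exact Complex.cpow_nat_inv_pow _ two_ne_zero
  have h1 := congrArg Complex.im hsq
  rw [← Complex.ofReal_pow] at h1
  simp [pow_two, h] at h1
  exact hz h1

lemma add_natCast_ne_zero_of_im {s : ℂ} (hs : s.im ≠ 0) (n : ℕ) : s + n ≠ 0 := by
  intro h
  have := congrArg Complex.im h
  simp at this
  exact hs this

lemma Gamma_ne_zero_of_im {s : ℂ} (hs : s.im ≠ 0) : Complex.Gamma s ≠ 0 :=
  Complex.Gamma_ne_zero fun m hm => add_natCast_ne_zero_of_im hs m (by rw [hm]; ring)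

lemma hyp2F1_zero (a b c : ℂ) : hyp2F1 a b c 0 = 1 := by
  rw [hyp2F1, tsum_eq_single 0 (fun n hn => by simp [hn])]
  simp [cpoch]

/-- The solution `₂F₁(a,b;c;1-t)` is continuous at `t = 1` with value `1`. -/
lemma tendsto_regular (a b : ℂ) {c : ℂ} (hc : 0 < c.re) :
    Tendsto (fun t : ℝ => hyp2F1 a b c ((1 - t : ℝ) : ℂ)) (𝓝[<] 1) (𝓝 1) := by
  obtain ⟨f', f'', h⟩ := hyp2F1_ode a b hc
  have h0 : ContinuousAt (hyp2F1 a b c) ((1 - (1 : ℝ) : ℝ) : ℂ) := by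
    simpa using (h 0 (by simp)).1.continuousAt
  have h1 : ContinuousAt (fun t : ℝ => ((1 - t : ℝ) : ℂ)) 1 := by fun_prop
  have h2 := (ContinuousAt.comp (f := fun t : ℝ => ((1 - t : ℝ) : ℂ)) h0 h1).tendsto
  simp only [Function.comp_def, sub_self, Complex.ofReal_zero, hyp2F1_zero] at h2
  exact h2.mono_left nhdsWithin_le_nhds

/-! ### The square integrability criterion -/

/-- For `α ≥ 1`, `β ∈ (-1,0)` and `z ∉ ℝ`, the combination
`y₁ - 2^{-α-1} β⁻¹ c y₂` is square integrable near `1` w.r.t. the Jacobi weight iff `c`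
equals the Friedrichs `m`-function value. -/
theorem jacobi_m_function_Friedrichs (α β : ℝ) (hα : 1 ≤ α)
    (hβ : β ∈ Set.Ioo (-1 : ℝ) 0) (z : ℂ) (hz : z.im ≠ 0) (c : ℂ) :
    IntegrableOn
      (fun x : ℝ =>
        ‖y1J α β z x - (((2 : ℝ) ^ (-α - 1) : ℝ) : ℂ) * ((β : ℂ))⁻¹ * c * y2J α β z x‖ ^ 2 *
          ((1 - x) ^ α * (1 + x) ^ β))
      (Set.Ioo (0 : ℝ) 1) ↔
    c = (((2 : ℝ) ^ (1 + α + β) * β : ℝ) : ℂ) *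
        (Complex.Gamma (1 + (β : ℂ)) / Complex.Gamma (1 - (β : ℂ))) *
        (Complex.Gamma ((1 + (α : ℂ) - (β : ℂ) + sigmaAB α β z) / 2) *
          Complex.Gamma ((1 + (α : ℂ) - (β : ℂ) - sigmaAB α β z) / 2)) /
        (Complex.Gamma ((1 + (α : ℂ) + (β : ℂ) + sigmaAB α β z) / 2) *
          Complex.Gamma ((1 + (α : ℂ) + (β : ℂ) - sigmaAB α β z) / 2)) := by
  set σ := sigmaAB α β z with hσ
  have hσim : σ.im ≠ 0 := sigmaAB_im_ne_zero α β hz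
  have hα0 : 0 < α := by linarith
  set a : ℂ := (((1 + α + β : ℝ) : ℂ) + σ) / 2 with ha
  set b : ℂ := (((1 + α + β : ℝ) : ℂ) - σ) / 2 with hb
  have hab : a + b = ((1 + α + β : ℝ) : ℂ) := by rw [ha, hb]; ring
  have haβ : (((1 + α - β : ℝ) : ℂ) + σ) / 2 = a + -β := by rw [ha]; push_cast; ring
  have hbβ : (((1 + α - β : ℝ) : ℂ) - σ) / 2 = b + -β := by rw [hb]; push_cast; ring
  have haim : a.im ≠ 0 := by
    have : a.im = σ.im / 2 := by simp [ha]
    rw [this]; simpa using hσim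
  have hbim : b.im ≠ 0 := by
    have : b.im = -(σ.im / 2) := by simp [hb]; ring
    rw [this]; simpa using hσim
  have haim' : (a + -β).im ≠ 0 := by simpa using haim
  have hbim' : (b + -β).im ≠ 0 := by simpa using hbim
  have hre1 : 0 < (1 + (β : ℂ)).re := by simp; linarith [hβ.1]
  have hre2 : 0 < (1 + -(β : ℂ)).re := by simp; linarith [hβ.2]
  have hc3 : a + b + 1 - (1 + (β : ℂ)) = 1 + α := by rw [hab]; push_cast; ring
  have hre3 : 0 < (a + b + 1 - (1 + (β : ℂ))).re := by rw [hc3]; simp; linarith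
  set k : ℂ := (((2 : ℝ) ^ (-α - 1) : ℝ) : ℂ) * ((β : ℂ))⁻¹ * c * ((2 : ℝ) : ℂ) ^ (-(β : ℂ)) with hk
  set Y : ℝ → ℂ := fun t => hyp2F1 a b (1 + β) t -
    k * ((t : ℂ) ^ (-(β : ℂ)) * hyp2F1 (a + -β) (b + -β) (1 + -β) t) with hY
  have hint : IntegrableOn (fun x : ℝ =>
        ‖y1J α β z x - (((2 : ℝ) ^ (-α - 1) : ℝ) : ℂ) * ((β : ℂ))⁻¹ * c * y2J α β z x‖ ^ 2 *
          ((1 - x) ^ α * (1 + x) ^ β)) (Set.Ioo (0 : ℝ) 1) ↔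
      IntegrableOn (fun x : ℝ => ‖Y ((1 + x) / 2)‖ ^ 2 * ((1 - x) ^ α * (1 + x) ^ β))
        (Set.Ioo (0 : ℝ) 1) := by
    refine integrableOn_congr_fun (fun x hx => ?_) measurableSet_Ioo
    have e : ((1 + x : ℝ) : ℂ) ^ (-(β : ℂ)) =
        ((2 : ℝ) : ℂ) ^ (-(β : ℂ)) * (((1 + x) / 2 : ℝ) : ℂ) ^ (-(β : ℂ)) := by
      rw [← Complex.mul_cpow_ofReal_nonneg (by norm_num) (by linarith [hx.1]),
        ← Complex.ofReal_mul]
      congr 2; ring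
    simp only [y1J, y2J, hY, hk, ← hσ, haβ, hbβ, ← sub_eq_add_neg (1 : ℂ) (β : ℂ), e, ← ha, ← hb]
    congr 4
    ring
  obtain ⟨u', u'', hu⟩ := solvesHyp_hyp2F1 a b hre1
  obtain ⟨w', w'', hw⟩ := solvesHyp_cpow a b (1 + β) (-β) (by ring) hre2
  obtain ⟨v', v'', hv⟩ := solvesHyp_one_sub a b (1 + β) hre3
  have hYsol := hu.sub_const_mul hw k
  have hYcont : ContinuousOn Y (Ioo 0 1) :=
    fun t ht => (hYsol t ht).1.continuousAt.continuousWithinAt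
  -- leading coefficients of the two solutions at `t = 1`
  have lim1 := tendsto_hyp2F1 (a := a) (b := b) (c := 1 + β) hα0
    (by rw [hab]; push_cast; ring) hre1 (add_natCast_ne_zero_of_im haim)
    (add_natCast_ne_zero_of_im hbim)
  have lim2 := tendsto_hyp2F1 (a := a + -β) (b := b + -β) (c := 1 + -β) hα0
    (by linear_combination (hab.trans (by push_cast; ring) : a + b = 1 + (α : ℂ) + β)) hre2
    (add_natCast_ne_zero_of_im haim') (add_natCast_ne_zero_of_im hbim')
  have limp : Tendsto (fun t : ℝ => (t : ℂ) ^ (-(β : ℂ))) (𝓝[<] 1) (𝓝 1) := by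
    have h0 : ((1 : ℝ) : ℂ) ∈ Complex.slitPlane := Complex.ofReal_mem_slitPlane.2 one_pos
    have : ContinuousAt (fun t : ℝ => (t : ℂ) ^ (-(β : ℂ))) 1 :=
      (Complex.continuous_ofReal.continuousAt).cpow continuousAt_const h0
    have h2 := this.tendsto
    simp only [Complex.ofReal_one, Complex.one_cpow] at h2
    exact h2.mono_left nhdsWithin_le_nhds
  set L : ℂ := Complex.Gamma (1 + β) * Complex.Gamma α / (Complex.Gamma a * Complex.Gamma b) -
    k * (1 * (Complex.Gamma (1 + -β) * Complex.Gamma α /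
      (Complex.Gamma (a + -β) * Complex.Gamma (b + -β)))) with hL
  have limY : Tendsto (fun t : ℝ => (((1 - t) ^ α : ℝ) : ℂ) * Y t) (𝓝[<] 1) (𝓝 L) := by
    refine (lim1.sub ((limp.mul lim2).const_mul k)).congr fun t => ?_
    simp only [hY]
    ring
  have hL0 : L = 0 ↔ c = (((2 : ℝ) ^ (1 + α + β) * β : ℝ) : ℂ) *
        (Complex.Gamma (1 + (β : ℂ)) / Complex.Gamma (1 - (β : ℂ))) *
        (Complex.Gamma ((1 + (α : ℂ) - (β : ℂ) + σ) / 2) *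
          Complex.Gamma ((1 + (α : ℂ) - (β : ℂ) - σ) / 2)) /
        (Complex.Gamma ((1 + (α : ℂ) + (β : ℂ) + σ) / 2) *
          Complex.Gamma ((1 + (α : ℂ) + (β : ℂ) - σ) / 2)) := by
    have e1 : (1 + (α : ℂ) - (β : ℂ) + σ) / 2 = a + -β := by rw [ha]; push_cast; ring
    have e2 : (1 + (α : ℂ) - (β : ℂ) - σ) / 2 = b + -β := by rw [hb]; push_cast; ring
    have e3 : (1 + (α : ℂ) + (β : ℂ) + σ) / 2 = a := by rw [ha]; push_cast; ring
    have e4 : (1 + (α : ℂ) + (β : ℂ) - σ) / 2 = b := by rw [hb]; push_cast; ring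
    have ek : k = ((((2 : ℝ) ^ (1 + α + β) : ℝ) : ℂ))⁻¹ * (β : ℂ)⁻¹ * c := by
      have : ((2 : ℝ) : ℂ) ^ (-(β : ℂ)) = (((2 : ℝ) ^ (-β) : ℝ) : ℂ) := by
        rw [Complex.ofReal_cpow (by norm_num)]; push_cast; rfl
      have h2 : ((2 : ℝ) ^ (1 + α + β))⁻¹ = (2 : ℝ) ^ (-α - 1) * (2 : ℝ) ^ (-β) := by
        rw [← Real.rpow_neg (by norm_num), ← Real.rpow_add (by norm_num)]
        congr 1; ring
      rw [hk, this, ← Complex.ofReal_inv ((2 : ℝ) ^ (1 + α + β)), h2]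
      push_cast; ring
    rw [e1, e2, e3, e4, hL, ek, ← sub_eq_add_neg (1 : ℂ) (β : ℂ), Complex.ofReal_mul]
    have g1 := Gamma_ne_zero_of_im haim
    have g2 := Gamma_ne_zero_of_im hbim
    have g3 := Gamma_ne_zero_of_im haim'
    have g4 := Gamma_ne_zero_of_im hbim'
    have g5 : Complex.Gamma (1 + β) ≠ 0 := Complex.Gamma_ne_zero_of_re_pos hre1
    have g6 : Complex.Gamma (1 - β) ≠ 0 := by
      rw [sub_eq_add_neg]; exact Complex.Gamma_ne_zero_of_re_pos hre2
    have g7 : Complex.Gamma α ≠ 0 := Complex.Gamma_ne_zero_of_re_pos (by simpa using hα0)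
    have hβ0 : (β : ℂ) ≠ 0 := by exact_mod_cast hβ.2.ne
    have hp : (((2 : ℝ) ^ (1 + α + β) : ℝ) : ℂ) ≠ 0 := by
      exact_mod_cast (Real.rpow_pos_of_pos two_pos _).ne'
    generalize (((2 : ℝ) ^ (1 + α + β) : ℝ) : ℂ) = p at *
    generalize Complex.Gamma a = A1 at *
    generalize Complex.Gamma b = A2 at *
    generalize Complex.Gamma (a + -β) = A3 at *
    generalize Complex.Gamma (b + -β) = A4 at *
    rw [sub_eq_zero]
    field_simp
    exact ⟨fun h => by linear_combination -h, fun h => by linear_combination -h⟩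
  rw [hint, ← hL0]
  constructor
  · intro h
    by_contra hne
    exact not_integrableOn_of_tendsto hα hβ.1 hne limY h
  · intro h
    rw [h] at limY
    obtain ⟨M, hM⟩ := hYsol.bounded_of_tendsto_zero hα0 hβ.1 hab hv
      (tendsto_regular a b hre3) limY
    exact integrableOn_of_bounded hα hβ.2 hYcont hM
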